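/- (Lemma 3.2, inequality (3.3)) Let (D, F) be a good pair, X ⊆ ℝⁿ convex compact, A affine with A(X) ⊆ M, g ∈ ℝⁿ, and define 2Φ_*(r) = sup_{x,y∈X} inf_{φ∈F, α>0} Φ_r(x, y; φ, α). Then for every ε ∈ (0, 1/4), the minimax optimal risk satisfies Risk_*(ε) ≥ [ln(1/(4ε)) / (2·ln(2/ε))] · Φ_*(ln(2/ε)). -/

import Mathlib

open MeasureTheory Real Matrix Set
open scoped ENNReal

/-- A "good pair" `(𝒟, ℱ)` in the sense of Juditsky–Nemirovski:
a parametric family of positive probability densities `p μ`, `μ ∈ M`, on `(Ω, P)`,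
together with a finite-dimensional linear space `F` of Borel functions on `Ω`
containing the constants, such that log-likelihood ratios belong to `F` and
`μ ↦ ln ∫ e^{φ} p_μ dP` is well defined (finite, witnessed by integrability)
and concave on `M` for every `φ ∈ F`. -/
structure GoodPair (Ω : Type*) [MeasurableSpace Ω] (P : Measure Ω)
    (E : Type*) [NormedAddCommGroup E] [NormedSpace ℝ E] where
  M : Set E
  p : E → Ω → ℝ
  F : Submodule ℝ (Ω → ℝ)
  M_open : IsOpen M
  M_convex : Convex ℝ M
  p_meas : ∀ μ ∈ M, Measurable (p μ)
  p_pos : ∀ μ ∈ M, ∀ ω, 0 < p μ ω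
  p_prob : ∀ μ ∈ M, ∫ ω, p μ ω ∂P = 1
  F_fd : FiniteDimensional ℝ F
  F_meas : ∀ φ ∈ F, Measurable φ
  F_const : ∀ c : ℝ, (fun _ : Ω => c) ∈ F
  logratio_mem : ∀ μ ∈ M, ∀ ν ∈ M, (fun ω => Real.log (p μ ω / p ν ω)) ∈ F
  F_finite : ∀ φ ∈ F, ∀ μ ∈ M, Integrable (fun ω => Real.exp (φ ω) * p μ ω) P
  F_concave : ∀ φ ∈ F,
    ConcaveOn ℝ M (fun μ => Real.log (∫ ω, Real.exp (φ ω) * p μ ω ∂P))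

variable {Ω : Type*} [MeasurableSpace Ω] {P : Measure Ω}
  {E : Type*} [NormedAddCommGroup E] [NormedSpace ℝ E] {n : ℕ}

/-- The distribution of the observation when the parameter is `μ`:
the measure with density `p μ` with respect to `P`. -/
noncomputable def obsMeasure (D : GoodPair Ω P E) (μ : E) : Measure Ω :=
  P.withDensity fun ω => ENNReal.ofReal (D.p μ ω)

/-- The `ε`-risk of an estimate `ghat` of the linear form `gᵀx`, `x ∈ X`:
`inf {δ | sup_{x ∈ X} Prob_{ω ∼ p_{A(x)}·P} {|ghat ω - gᵀx| > δ} < ε}`. -/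
noncomputable def Risk (D : GoodPair Ω P E) (A : (Fin n → ℝ) →ᵃ[ℝ] E)
    (g : Fin n → ℝ) (X : Set (Fin n → ℝ)) (ghat : Ω → ℝ) (ε : ℝ) : ℝ :=
  sInf {δ : ℝ |
    (⨆ x ∈ X, obsMeasure D (A x) {ω | δ < |ghat ω - g ⬝ᵥ x|}) < ENNReal.ofReal ε}

/-- The minimax optimal `ε`-risk over all (Borel) estimates. -/
noncomputable def RiskStar (D : GoodPair Ω P E) (A : (Fin n → ℝ) →ᵃ[ℝ] E)
    (g : Fin n → ℝ) (X : Set (Fin n → ℝ)) (ε : ℝ) : ℝ :=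
  sInf {ρ : ℝ | ∃ ghat : Ω → ℝ, Measurable ghat ∧ ρ = Risk D A g X ghat ε}

/-- The minimax optimal `ε`-risk over affine estimates, i.e. estimates `φ ∈ F`. -/
noncomputable def RiskAff (D : GoodPair Ω P E) (A : (Fin n → ℝ) →ᵃ[ℝ] E)
    (g : Fin n → ℝ) (X : Set (Fin n → ℝ)) (ε : ℝ) : ℝ :=
  sInf {ρ : ℝ | ∃ φ ∈ D.F, ρ = Risk D A g X φ ε}

/-- The function `Φ_r(x, y; φ, α)`. -/
noncomputable def PhiFun (D : GoodPair Ω P E) (A : (Fin n → ℝ) →ᵃ[ℝ] E)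
    (g : Fin n → ℝ) (r : ℝ) (x y : Fin n → ℝ) (φ : Ω → ℝ) (α : ℝ) : ℝ :=
  g ⬝ᵥ x - g ⬝ᵥ y
    + α * Real.log (∫ ω, Real.exp (φ ω / α) * D.p (A y) ω ∂P)
    + α * Real.log (∫ ω, Real.exp (-φ ω / α) * D.p (A x) ω ∂P)
    + 2 * α * r

/-- `Φ_*(r)` defined through the sup-inf value:
`2Φ_*(r) = sup_{x,y ∈ X} inf_{φ ∈ F, α > 0} Φ_r(x, y; φ, α)`. -/
noncomputable def PhiStarSI (D : GoodPair Ω P E) (A : (Fin n → ℝ) →ᵃ[ℝ] E)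
    (g : Fin n → ℝ) (X : Set (Fin n → ℝ)) (r : ℝ) : ℝ :=
  (1/2) * sSup {v : ℝ | ∃ x ∈ X, ∃ y ∈ X,
    v = sInf {w : ℝ | ∃ φ ∈ D.F, ∃ α : ℝ, 0 < α ∧ w = PhiFun D A g r x y φ α}}

/-- `Φ_*(r)` defined through the inf-sup value:
`2Φ_*(r) = inf_{φ ∈ F, α > 0} sup_{x,y ∈ X} Φ_r(x, y; φ, α)`. -/
noncomputable def PhiStarIS (D : GoodPair Ω P E) (A : (Fin n → ℝ) →ᵃ[ℝ] E)
    (g : Fin n → ℝ) (X : Set (Fin n → ℝ)) (r : ℝ) : ℝ :=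
  (1/2) * sInf {v : ℝ | ∃ φ ∈ D.F, ∃ α : ℝ, 0 < α ∧
    v = sSup {w : ℝ | ∃ x ∈ X, ∃ y ∈ X, w = PhiFun D A g r x y φ α}}

/-!
By Cauchy–Schwarz, half of `F_φ(ν) + F_{-φ}(μ)` is minimised over `φ ∈ F` at half the
log-likelihood ratio, with minimum the logarithm of the Hellinger affinity of `μ` and `ν`; this
logarithm is therefore jointly concave in `(μ, ν)`. Minimising also over the scale `α` identifies
`2Φ_*(r)` with the modulus of continuity `ω(r)` of `gᵀx` over pairs of affinity at least `e^{-r}`.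
Shrinking a pair towards one of its ends gives `t ω(r) ≤ ω(t r)` for `t ∈ [0, 1]`, by concavity,
and Le Cam's two-point argument gives `ω(ln(1/(4ε))/2) ≤ 2 Risk_*(ε)`. Combine the two with
`r = ln(2/ε)` and `t = ln(1/(4ε)) / (2r)`.
-/

lemma exp_half_log_div_mul {a b : ℝ} (ha : 0 < a) (hb : 0 < b) :
    Real.exp (2⁻¹ * Real.log (a / b)) * b = √(a * b) := by
  rw [← div_eq_inv_mul, ← Real.log_sqrt (div_pos ha hb).le,
    Real.exp_log (sqrt_pos.2 (div_pos ha hb)), Real.sqrt_div ha.le, Real.sqrt_mul ha.le,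
    div_mul_eq_mul_div, mul_div_assoc, Real.div_sqrt]

lemma integral_pos_of_forall_pos [NeZero P] {f : Ω → ℝ} (hf : Integrable f P)
    (hf0 : ∀ ω, 0 < f ω) : 0 < ∫ ω, f ω ∂P := by
  rw [integral_pos_iff_support_of_nonneg (fun ω => (hf0 ω).le) hf,
    Function.support_eq_univ fun ω => (hf0 ω).ne']
  exact Measure.measure_univ_pos.2 (NeZero.ne P)

lemma tendsto_measureReal_lt_abs {Q : Measure Ω} [IsFiniteMeasure Q] {f : Ω → ℝ}
    (hf : Measurable f) :
    Filter.Tendsto (fun R : ℝ => Q.real {ω | R < |f ω|}) Filter.atTop (nhds 0) := by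
  have tight := tendsto_measure_norm_gt_of_isTightMeasureSet
    (isTightMeasureSet_singleton (μ := Q.map f))
  simp only [iSup_singleton, norm_eq_abs,
    Measure.map_apply hf (measurableSet_lt measurable_const continuous_abs.measurable)] at tight
  exact (ENNReal.tendsto_toReal ENNReal.zero_ne_top).comp tight

/-- The Hellinger affinity of two densities with respect to `P`. The product is kept under the
root, so that replacing `(f, g)` by `(e^{-φ} f, e^φ g)` visibly changes nothing. -/
noncomputable def hellingerAffinity (P : Measure Ω) (f g : Ω → ℝ) : ℝ :=
  ∫ ω, √(f ω * g ω) ∂P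

section HellingerAffinity

variable {f g : Ω → ℝ}

lemma hellingerAffinity_comm (f g : Ω → ℝ) :
    hellingerAffinity P f g = hellingerAffinity P g f := by
  simp only [hellingerAffinity, mul_comm]

lemma hellingerAffinity_self (hf : 0 ≤ f) : hellingerAffinity P f f = ∫ ω, f ω ∂P :=
  integral_congr_ae (ae_of_all _ fun ω => Real.sqrt_mul_self (hf ω))

lemma integrable_sqrt_mul (hf : Integrable f P) (hg : Integrable g P) :
    Integrable (fun ω => √(f ω * g ω)) P := by
  refine (hf.norm.add hg.norm).mono'
    (continuous_sqrt.comp_aestronglyMeasurable (hf.1.mul hg.1)) (ae_of_all _ fun ω => ?_)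
  have hmul : f ω * g ω ≤ |f ω| * |g ω| := (le_abs_self _).trans_eq (abs_mul _ _)
  rw [norm_of_nonneg (sqrt_nonneg _), Real.sqrt_le_iff]
  refine ⟨add_nonneg (norm_nonneg _) (norm_nonneg _), ?_⟩
  simp only [Pi.add_apply, norm_eq_abs]
  nlinarith [mul_nonneg (abs_nonneg (f ω)) (abs_nonneg (g ω)), sq_nonneg |f ω|, sq_nonneg |g ω|]

lemma hellingerAffinity_nonneg (f g : Ω → ℝ) : 0 ≤ hellingerAffinity P f g :=
  integral_nonneg fun _ => sqrt_nonneg _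

lemma hellingerAffinity_pos [NeZero P] (hf : Integrable f P) (hg : Integrable g P)
    (hf0 : ∀ ω, 0 < f ω) (hg0 : ∀ ω, 0 < g ω) : 0 < hellingerAffinity P f g :=
  integral_pos_of_forall_pos (integrable_sqrt_mul hf hg)
    fun ω => sqrt_pos.2 (mul_pos (hf0 ω) (hg0 ω))

lemma hellingerAffinity_sq_le (hf : Integrable f P) (hg : Integrable g P)
    (hf0 : 0 ≤ f) (hg0 : 0 ≤ g) :
    hellingerAffinity P f g ^ 2 ≤ (∫ ω, f ω ∂P) * ∫ ω, g ω ∂P := by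
  have memLp_sqrt {u : Ω → ℝ} (hu : Integrable u P) (hu0 : 0 ≤ u) :
      MemLp (fun ω => √(u ω)) (ENNReal.ofReal 2) P := by
    rw [ENNReal.ofReal_ofNat,
      memLp_two_iff_integrable_sq (continuous_sqrt.comp_aestronglyMeasurable hu.1)]
    simpa only [Real.sq_sqrt (hu0 _)] using hu
  have cauchySchwarz := integral_mul_le_Lp_mul_Lq_of_nonneg (μ := P) HolderConjugate.two_two
    (ae_of_all _ fun ω => sqrt_nonneg (f ω)) (ae_of_all _ fun ω => sqrt_nonneg (g ω))
    (memLp_sqrt hf hf0) (memLp_sqrt hg hg0)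
  simp only [← Real.sqrt_mul (hf0 _), rpow_two, Real.sq_sqrt (hf0 _), Real.sq_sqrt (hg0 _),
    ← Real.sqrt_eq_rpow] at cauchySchwarz
  calc hellingerAffinity P f g ^ 2
      ≤ (√(∫ ω, f ω ∂P) * √(∫ ω, g ω ∂P)) ^ 2 :=
        pow_le_pow_left₀ (hellingerAffinity_nonneg f g) cauchySchwarz 2
    _ = (∫ ω, f ω ∂P) * ∫ ω, g ω ∂P := by
        rw [mul_pow, Real.sq_sqrt (integral_nonneg hf0), Real.sq_sqrt (integral_nonneg hg0)]

lemma hellingerAffinity_sq_le_of_measurableSet (hf : Integrable f P) (hg : Integrable g P)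
    (hf0 : 0 ≤ f) (hg0 : 0 ≤ g) {B : Set Ω} (hB : MeasurableSet B) :
    hellingerAffinity P f g ^ 2
      ≤ 2 * ((∫ ω in B, f ω ∂P) * (∫ ω, g ω ∂P) + (∫ ω, f ω ∂P) * ∫ ω in Bᶜ, g ω ∂P) := by
  have hsplit : hellingerAffinity P f g
      = hellingerAffinity (P.restrict B) f g + hellingerAffinity (P.restrict Bᶜ) f g :=
    (integral_add_compl hB (integrable_sqrt_mul hf hg)).symm
  calc hellingerAffinity P f g ^ 2
      ≤ 2 * (hellingerAffinity (P.restrict B) f g ^ 2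
          + hellingerAffinity (P.restrict Bᶜ) f g ^ 2) := hsplit ▸ add_sq_le
    _ ≤ 2 * ((∫ ω in B, f ω ∂P) * (∫ ω in B, g ω ∂P)
          + (∫ ω in Bᶜ, f ω ∂P) * ∫ ω in Bᶜ, g ω ∂P) := by
        gcongr <;> exact hellingerAffinity_sq_le hf.restrict hg.restrict hf0 hg0
    _ ≤ 2 * ((∫ ω in B, f ω ∂P) * (∫ ω, g ω ∂P) + (∫ ω, f ω ∂P) * ∫ ω in Bᶜ, g ω ∂P) := by
        have hgB := setIntegral_le_integral (s := B) hg (ae_of_all _ hg0)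
        have hfB := setIntegral_le_integral (s := Bᶜ) hf (ae_of_all _ hf0)
        gcongr ?_ * (?_ + ?_)
        · exact mul_le_mul_of_nonneg_left hgB (integral_nonneg hf0)
        · exact mul_le_mul_of_nonneg_right hfB (integral_nonneg hg0)

-- Cauchy–Schwarz applied to `|f - g| = |√f - √g| (√f + √g)`.
lemma sq_integral_abs_sub_le (hf : Integrable f P) (hg : Integrable g P)
    (hf0 : 0 ≤ f) (hg0 : 0 ≤ g) :
    (∫ ω, |f ω - g ω| ∂P) ^ 2
      ≤ ((∫ ω, f ω ∂P) + ∫ ω, g ω ∂P) ^ 2 - 4 * hellingerAffinity P f g ^ 2 := by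
  have hfg := (integrable_sqrt_mul hf hg).const_mul 2
  have hsub : (fun ω => (√(f ω) - √(g ω)) ^ 2) = fun ω => f ω + g ω - 2 * √(f ω * g ω) := by
    ext ω
    rw [sub_sq, Real.sq_sqrt (hf0 ω), Real.sq_sqrt (hg0 ω), Real.sqrt_mul (hf0 ω)]
    ring
  have hadd : (fun ω => (√(f ω) + √(g ω)) ^ 2) = fun ω => f ω + g ω + 2 * √(f ω * g ω) := by
    ext ω
    rw [add_sq, Real.sq_sqrt (hf0 ω), Real.sq_sqrt (hg0 ω), Real.sqrt_mul (hf0 ω)]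
    ring
  have hprod (ω : Ω) : √((√(f ω) - √(g ω)) ^ 2 * (√(f ω) + √(g ω)) ^ 2) = |f ω - g ω| := by
    rw [← mul_pow, Real.sqrt_sq_eq_abs, mul_comm, ← sq_sub_sq, Real.sq_sqrt (hf0 ω),
      Real.sq_sqrt (hg0 ω)]
  calc (∫ ω, |f ω - g ω| ∂P) ^ 2
      = hellingerAffinity P (fun ω => (√(f ω) - √(g ω)) ^ 2)
          (fun ω => (√(f ω) + √(g ω)) ^ 2) ^ 2 := by
        simp only [hellingerAffinity, hprod]
    _ ≤ (∫ ω, (√(f ω) - √(g ω)) ^ 2 ∂P) * ∫ ω, (√(f ω) + √(g ω)) ^ 2 ∂P :=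
        hellingerAffinity_sq_le (hsub ▸ (hf.add hg).sub hfg) (hadd ▸ (hf.add hg).add hfg)
          (fun _ => sq_nonneg _) fun _ => sq_nonneg _
    _ = ((∫ ω, f ω ∂P) + ∫ ω, g ω ∂P) ^ 2 - 4 * hellingerAffinity P f g ^ 2 := by
        rw [hsub, hadd, integral_sub (hf.fun_add hg) hfg, integral_add (hf.fun_add hg) hfg,
          integral_add hf hg, integral_const_mul, hellingerAffinity]
        ring

end HellingerAffinity

namespace GoodPair

/-- The Hellinger affinity of the members `μ` and `ν` of the family. -/
noncomputable def affinity (D : GoodPair Ω P E) (μ ν : E) : ℝ :=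
  hellingerAffinity P (D.p μ) (D.p ν)

/-- The function `F_φ(μ) = ln ∫ e^φ p_μ dP`. -/
noncomputable def logLaplace (D : GoodPair Ω P E) (φ : Ω → ℝ) (μ : E) : ℝ :=
  Real.log (∫ ω, Real.exp (φ ω) * D.p μ ω ∂P)

variable (D : GoodPair Ω P E) {μ ν : E}

lemma p_nonneg (hμ : μ ∈ D.M) : 0 ≤ D.p μ := fun ω => (D.p_pos μ hμ ω).le

lemma integrable_p (hμ : μ ∈ D.M) : Integrable (D.p μ) P := by
  simpa using D.F_finite 0 D.F.zero_mem μ hμ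

lemma neZero_measure (hμ : μ ∈ D.M) : NeZero P :=
  ⟨by rintro rfl; simpa using D.p_prob μ hμ⟩

lemma affinity_pos (hμ : μ ∈ D.M) (hν : ν ∈ D.M) : 0 < D.affinity μ ν :=
  have := D.neZero_measure hμ
  hellingerAffinity_pos (D.integrable_p hμ) (D.integrable_p hν) (D.p_pos μ hμ) (D.p_pos ν hν)

lemma affinity_comm (μ ν : E) : D.affinity μ ν = D.affinity ν μ :=
  hellingerAffinity_comm (D.p μ) (D.p ν)

lemma affinity_self (hμ : μ ∈ D.M) : D.affinity μ μ = 1 :=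
  (hellingerAffinity_self (D.p_nonneg hμ)).trans (D.p_prob μ hμ)

lemma integral_exp_mul_p_pos (hμ : μ ∈ D.M) {φ : Ω → ℝ} (hφ : φ ∈ D.F) :
    0 < ∫ ω, Real.exp (φ ω) * D.p μ ω ∂P :=
  have := D.neZero_measure hμ
  integral_pos_of_forall_pos (D.F_finite φ hφ μ hμ)
    fun ω => mul_pos (Real.exp_pos _) (D.p_pos μ hμ ω)

lemma two_mul_log_affinity_le (hμ : μ ∈ D.M) (hν : ν ∈ D.M) {φ : Ω → ℝ} (hφ : φ ∈ D.F) :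
    2 * Real.log (D.affinity μ ν) ≤ D.logLaplace φ ν + D.logLaplace (-φ) μ := by
  have hφ' := D.F.neg_mem hφ
  have tilt : D.affinity μ ν = hellingerAffinity P (fun ω => Real.exp ((-φ) ω) * D.p μ ω)
      fun ω => Real.exp (φ ω) * D.p ν ω := by
    refine integral_congr_ae (ae_of_all _ fun ω => ?_)
    simp only [Pi.neg_apply, mul_mul_mul_comm, ← Real.exp_add, neg_add_cancel, Real.exp_zero,
      one_mul]
  have hsq : D.affinity μ ν ^ 2
      ≤ (∫ ω, Real.exp ((-φ) ω) * D.p μ ω ∂P) * ∫ ω, Real.exp (φ ω) * D.p ν ω ∂P :=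
    tilt ▸ hellingerAffinity_sq_le (D.F_finite _ hφ' μ hμ) (D.F_finite _ hφ ν hν)
      (fun ω => mul_nonneg (Real.exp_pos _).le (D.p_nonneg hμ ω))
      fun ω => mul_nonneg (Real.exp_pos _).le (D.p_nonneg hν ω)
  calc 2 * Real.log (D.affinity μ ν) = Real.log (D.affinity μ ν ^ 2) := by
        rw [Real.log_pow, Nat.cast_ofNat]
    _ ≤ Real.log ((∫ ω, Real.exp ((-φ) ω) * D.p μ ω ∂P) * ∫ ω, Real.exp (φ ω) * D.p ν ω ∂P) :=
        Real.log_le_log (pow_pos (D.affinity_pos hμ hν) 2) hsq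
    _ = D.logLaplace φ ν + D.logLaplace (-φ) μ := by
        rw [Real.log_mul (D.integral_exp_mul_p_pos hμ hφ').ne'
          (D.integral_exp_mul_p_pos hν hφ).ne', add_comm, logLaplace, logLaplace]

lemma logLaplace_half_log_div (hμ : μ ∈ D.M) (hν : ν ∈ D.M) :
    D.logLaplace ((2⁻¹ : ℝ) • fun ω => Real.log (D.p μ ω / D.p ν ω)) ν
      = Real.log (D.affinity μ ν) := by
  simp only [logLaplace, affinity, hellingerAffinity, Pi.smul_apply, smul_eq_mul,
    exp_half_log_div_mul (D.p_pos μ hμ _) (D.p_pos ν hν _)]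

lemma isLeast_two_mul_log_affinity (hμ : μ ∈ D.M) (hν : ν ∈ D.M) :
    IsLeast ((fun φ => D.logLaplace φ ν + D.logLaplace (-φ) μ) '' D.F)
      (2 * Real.log (D.affinity μ ν)) := by
  refine ⟨⟨(2⁻¹ : ℝ) • fun ω => Real.log (D.p μ ω / D.p ν ω),
    D.F.smul_mem _ (D.logratio_mem μ hμ ν hν), ?_⟩, ?_⟩
  · have neg_logratio : -((2⁻¹ : ℝ) • fun ω => Real.log (D.p μ ω / D.p ν ω))
        = (2⁻¹ : ℝ) • fun ω => Real.log (D.p ν ω / D.p μ ω) := by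
      ext ω
      simp only [Pi.neg_apply, Pi.smul_apply, smul_eq_mul]
      rw [← inv_div (D.p ν ω), Real.log_inv, mul_neg, neg_neg]
    simp only [neg_logratio, D.logLaplace_half_log_div hμ hν, D.logLaplace_half_log_div hν hμ]
    rw [D.affinity_comm ν μ, two_mul]
  · rintro _ ⟨φ, hφ, rfl⟩
    exact D.two_mul_log_affinity_le hμ hν hφ

-- A pointwise minimum over `φ` of functions that are concave in `(μ, ν)`.
lemma concaveOn_log_affinity :
    ConcaveOn ℝ (D.M ×ˢ D.M) fun q => Real.log (D.affinity q.1 q.2) := by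
  refine ⟨D.M_convex.prod D.M_convex, fun a ha b hb s t hs ht hst => ?_⟩
  obtain ⟨hc₁, hc₂⟩ := D.M_convex.prod D.M_convex ha hb hs ht hst
  obtain ⟨φ, hφ, hmin⟩ := (D.isLeast_two_mul_log_affinity hc₁ hc₂).1
  have hconc₁ := (D.F_concave (-φ) (D.F.neg_mem hφ)).2 ha.1 hb.1 hs ht hst
  have hconc₂ := (D.F_concave φ hφ).2 ha.2 hb.2 hs ht hst
  have hle_a := mul_le_mul_of_nonneg_left (D.two_mul_log_affinity_le ha.1 ha.2 hφ) hs
  have hle_b := mul_le_mul_of_nonneg_left (D.two_mul_log_affinity_le hb.1 hb.2 hφ) ht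
  simp only [smul_eq_mul, logLaplace, Prod.fst_add, Prod.snd_add, Prod.smul_fst, Prod.smul_snd]
    at hmin hconc₁ hconc₂ hle_a hle_b ⊢
  linarith

lemma mul_log_affinity_le_log_affinity_lineMap (hμ : μ ∈ D.M) (hν : ν ∈ D.M) {t : ℝ}
    (ht0 : 0 ≤ t) (ht1 : t ≤ 1) :
    t * Real.log (D.affinity μ ν) ≤ Real.log (D.affinity (AffineMap.lineMap ν μ t) ν) := by
  have hconc := D.concaveOn_log_affinity.2 (x := (ν, ν)) ⟨hν, hν⟩ (y := (μ, ν)) ⟨hμ, hν⟩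
    (sub_nonneg.2 ht1) ht0 (sub_add_cancel 1 t)
  simpa [D.affinity_self hν, AffineMap.lineMap_apply_module, ← add_smul] using hconc

lemma continuousOn_affinity_comp_affineMap {V : Type*} [NormedAddCommGroup V] [NormedSpace ℝ V]
    [FiniteDimensional ℝ V] (A : V →ᵃ[ℝ] E) :
    ContinuousOn (fun q : V × V => D.affinity (A q.1) (A q.2))
      ((A ⁻¹' D.M) ×ˢ (A ⁻¹' D.M)) := by
  have hopen := D.M_open.preimage A.continuous_of_finiteDimensional
  have hlog := (D.concaveOn_log_affinity.comp_affineMap (A.prodMap A)).continuousOn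
    (hopen.prod hopen)
  exact hlog.rexp.congr fun q hq => (Real.exp_log (D.affinity_pos hq.1 hq.2)).symm

lemma obsMeasure_real_apply (hμ : μ ∈ D.M) {B : Set Ω} (hB : MeasurableSet B) :
    (obsMeasure D μ).real B = ∫ ω in B, D.p μ ω ∂P := by
  rw [measureReal_def, obsMeasure, withDensity_apply _ hB,
    ← ofReal_integral_eq_lintegral_ofReal (D.integrable_p hμ).restrict
      (ae_of_all _ (D.p_nonneg hμ)), ENNReal.toReal_ofReal (integral_nonneg (D.p_nonneg hμ))]

lemma isFiniteMeasure_obsMeasure (hμ : μ ∈ D.M) : IsFiniteMeasure (obsMeasure D μ) :=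
  isFiniteMeasure_withDensity_ofReal (D.integrable_p hμ).2

lemma affinity_sq_le_of_measurableSet (hμ : μ ∈ D.M) (hν : ν ∈ D.M) {B : Set Ω}
    (hB : MeasurableSet B) :
    D.affinity μ ν ^ 2 ≤ 2 * ((obsMeasure D μ).real B + (obsMeasure D ν).real Bᶜ) := by
  have h := hellingerAffinity_sq_le_of_measurableSet (D.integrable_p hμ) (D.integrable_p hν)
    (D.p_nonneg hμ) (D.p_nonneg hν) hB
  rwa [D.p_prob μ hμ, D.p_prob ν hν, mul_one, one_mul, ← D.obsMeasure_real_apply hμ hB,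
    ← D.obsMeasure_real_apply hν hB.compl] at h

lemma abs_obsMeasure_real_sub_le (hμ : μ ∈ D.M) (hν : ν ∈ D.M) {B : Set Ω}
    (hB : MeasurableSet B) :
    |(obsMeasure D μ).real B - (obsMeasure D ν).real B| ≤ 2 * √(1 - D.affinity μ ν ^ 2) := by
  have hμi := D.integrable_p hμ
  have hνi := D.integrable_p hν
  have hsq := sq_integral_abs_sub_le hμi hνi (D.p_nonneg hμ) (D.p_nonneg hν)
  rw [D.p_prob μ hμ, D.p_prob ν hν, ← affinity] at hsq
  calc |(obsMeasure D μ).real B - (obsMeasure D ν).real B|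
      = |∫ ω in B, (D.p μ ω - D.p ν ω) ∂P| := by
        rw [D.obsMeasure_real_apply hμ hB, D.obsMeasure_real_apply hν hB,
          integral_sub hμi.restrict hνi.restrict]
    _ ≤ ∫ ω in B, |D.p μ ω - D.p ν ω| ∂P := abs_integral_le_integral_abs
    _ ≤ ∫ ω, |D.p μ ω - D.p ν ω| ∂P :=
        setIntegral_le_integral (hμi.sub hνi).abs (ae_of_all _ fun _ => abs_nonneg _)
    _ ≤ √(2 ^ 2 * (1 - D.affinity μ ν ^ 2)) := Real.le_sqrt_of_sq_le (by linarith)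
    _ = 2 * √(1 - D.affinity μ ν ^ 2) := by
        rw [Real.sqrt_mul (sq_nonneg 2), Real.sqrt_sq zero_le_two]

lemma continuousOn_obsMeasure_real {V : Type*} [NormedAddCommGroup V] [NormedSpace ℝ V]
    [FiniteDimensional ℝ V] (A : V →ᵃ[ℝ] E) {B : Set Ω} (hB : MeasurableSet B) :
    ContinuousOn (fun x => (obsMeasure D (A x)).real B) (A ⁻¹' D.M) := by
  intro x₀ hx₀
  have haff : ContinuousOn (fun x => D.affinity (A x) (A x₀)) (A ⁻¹' D.M) :=
    (D.continuousOn_affinity_comp_affineMap A).comp (f := fun x => (x, x₀)) (by fun_prop)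
      fun x hx => ⟨hx, hx₀⟩
  have hlim : Filter.Tendsto (fun x => 2 * √(1 - D.affinity (A x) (A x₀) ^ 2))
      (nhdsWithin x₀ (A ⁻¹' D.M)) (nhds 0) := by
    have h : ContinuousOn (fun x => 2 * √(1 - D.affinity (A x) (A x₀) ^ 2)) (A ⁻¹' D.M) := by
      fun_prop
    simpa [ContinuousWithinAt, D.affinity_self hx₀] using h x₀ hx₀
  refine tendsto_iff_dist_tendsto_zero.2 (squeeze_zero' ?_ ?_ hlim)
  · exact Filter.Eventually.of_forall fun _ => dist_nonneg
  · filter_upwards [self_mem_nhdsWithin] with x hx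
    exact D.abs_obsMeasure_real_sub_le hx hx₀ hB

lemma exists_forall_obsMeasure_real_lt {V : Type*} [NormedAddCommGroup V] [NormedSpace ℝ V]
    [FiniteDimensional ℝ V] (A : V →ᵃ[ℝ] E) {K : Set V} (hK : IsCompact K)
    (hA : ∀ x ∈ K, A x ∈ D.M) {f : Ω → ℝ} (hf : Measurable f) {η : ℝ} (hη : 0 < η) :
    ∃ R : ℝ, ∀ x ∈ K, (obsMeasure D (A x)).real {ω | R < |f ω|} < η := by
  have hfin (x) (hx : x ∈ K) := D.isFiniteMeasure_obsMeasure (hA x hx)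
  have hmeas (R : ℝ) : MeasurableSet {ω | R < |f ω|} := measurableSet_lt measurable_const hf.abs
  have dini : TendstoUniformlyOn (fun (R : ℝ) x => (obsMeasure D (A x)).real {ω | R < |f ω|})
      (fun _ => 0) Filter.atTop K := by
    refine Antitone.tendstoUniformlyOn_of_forall_tendsto hK
      (fun R => (D.continuousOn_obsMeasure_real A (hmeas R)).mono hA)
      (fun x hx R R' hR => ?_) continuousOn_const fun x hx => ?_
    · have := hfin x hx
      exact measureReal_mono fun ω hω => hR.trans_lt hω
    · have := hfin x hx
      exact tendsto_measureReal_lt_abs hf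
  obtain ⟨R, hR⟩ := (Metric.tendstoUniformlyOn_iff.1 dini η hη).exists
  exact ⟨R, fun x hx => lt_of_abs_lt (by simpa using hR x hx)⟩

-- Le Cam's two-point argument: `{δ < |h - a|}` tests `μ` against `ν` if `2δ < a - b`.
lemma sub_le_two_mul_of_four_mul_le_affinity_sq (hμ : μ ∈ D.M) (hν : ν ∈ D.M) {h : Ω → ℝ}
    (hh : Measurable h) {a b δ ε : ℝ}
    (hμε : obsMeasure D μ {ω | δ < |h ω - a|} < ENNReal.ofReal ε)
    (hνε : obsMeasure D ν {ω | δ < |h ω - b|} < ENNReal.ofReal ε)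
    (haff : 4 * ε ≤ D.affinity μ ν ^ 2) : a - b ≤ 2 * δ := by
  have := D.isFiniteMeasure_obsMeasure hμ
  have := D.isFiniteMeasure_obsMeasure hν
  by_contra! hab
  have hB : MeasurableSet {ω | δ < |h ω - a|} :=
    measurableSet_lt measurable_const (hh.sub_const a).abs
  have hcompl : {ω | δ < |h ω - a|}ᶜ ⊆ {ω | δ < |h ω - b|} := fun ω hω => by
    have hωa : |h ω - a| ≤ δ := not_lt.1 hω
    have hωb : δ < h ω - b := by linarith [(abs_le.1 hωa).1]
    exact hωb.trans_le (le_abs_self _)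
  have hμB : (obsMeasure D μ).real {ω | δ < |h ω - a|} < ε :=
    (ENNReal.lt_ofReal_iff_toReal_lt (measure_ne_top _ _)).1 hμε
  have hνB : (obsMeasure D ν).real {ω | δ < |h ω - a|}ᶜ < ε :=
    (measureReal_mono hcompl).trans_lt
      ((ENNReal.lt_ofReal_iff_toReal_lt (measure_ne_top _ _)).1 hνε)
  linarith [D.affinity_sq_le_of_measurableSet hμ hν hB]

end GoodPair

section PhiStar

variable (D : GoodPair Ω P E) (A : (Fin n → ℝ) →ᵃ[ℝ] E) (g : Fin n → ℝ) {r : ℝ}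
  {x y : Fin n → ℝ}

lemma phiFun_eq (φ : Ω → ℝ) (α : ℝ) :
    PhiFun D A g r x y φ α = g ⬝ᵥ x - g ⬝ᵥ y
      + α * (D.logLaplace (α⁻¹ • φ) (A y) + D.logLaplace (-(α⁻¹ • φ)) (A x)) + 2 * α * r := by
  simp only [PhiFun, GoodPair.logLaplace, Pi.neg_apply, Pi.smul_apply, smul_eq_mul,
    ← div_eq_inv_mul, neg_div]
  ring

lemma isLeast_phiFun (hx : A x ∈ D.M) (hy : A y ∈ D.M) {α : ℝ} (hα : 0 < α) :
    IsLeast ((fun φ => PhiFun D A g r x y φ α) '' D.F)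
      (g ⬝ᵥ x - g ⬝ᵥ y + 2 * α * (Real.log (D.affinity (A x) (A y)) + r)) := by
  refine ⟨?_, ?_⟩
  · obtain ⟨φ, hφ, hmin⟩ := (D.isLeast_two_mul_log_affinity hx hy).1
    refine ⟨α • φ, D.F.smul_mem α hφ, ?_⟩
    simp only [phiFun_eq, inv_smul_smul₀ hα.ne'] at hmin ⊢
    rw [hmin]
    ring
  · rintro _ ⟨φ, hφ, rfl⟩
    have hle := D.two_mul_log_affinity_le hx hy (D.F.smul_mem α⁻¹ hφ)
    simp only [phiFun_eq]
    linarith [mul_le_mul_of_nonneg_left hle hα.le]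

/-- The values of `Φ_r(x, y; φ, α)` over `φ ∈ F` and `α > 0`, whose infimum enters `Φ_*(r)`. -/
def phiValues (D : GoodPair Ω P E) (A : (Fin n → ℝ) →ᵃ[ℝ] E) (g : Fin n → ℝ) (r : ℝ)
    (x y : Fin n → ℝ) : Set ℝ :=
  {w : ℝ | ∃ φ ∈ D.F, ∃ α : ℝ, 0 < α ∧ w = PhiFun D A g r x y φ α}

lemma add_two_mul_log_affinity_mem_phiValues (hx : A x ∈ D.M) (hy : A y ∈ D.M) {α : ℝ}
    (hα : 0 < α) :
    g ⬝ᵥ x - g ⬝ᵥ y + 2 * α * (Real.log (D.affinity (A x) (A y)) + r)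
      ∈ phiValues D A g r x y := by
  obtain ⟨φ, hφ, h⟩ := (isLeast_phiFun D A g hx hy hα).1
  exact ⟨φ, hφ, α, hα, h.symm⟩

lemma isGLB_phiValues (hx : A x ∈ D.M) (hy : A y ∈ D.M)
    (hr : -r ≤ Real.log (D.affinity (A x) (A y))) :
    IsGLB (phiValues D A g r x y) (g ⬝ᵥ x - g ⬝ᵥ y) := by
  refine ⟨?_, fun b hb => ?_⟩
  · rintro _ ⟨φ, hφ, α, hα, rfl⟩
    have hslope : 0 ≤ 2 * α * (Real.log (D.affinity (A x) (A y)) + r) :=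
      mul_nonneg (by positivity) (by linarith)
    linarith [(isLeast_phiFun (r := r) D A g hx hy hα).2 ⟨φ, hφ, rfl⟩]
  · set L := Real.log (D.affinity (A x) (A y)) + r
    have hlim : Filter.Tendsto (fun α : ℝ => g ⬝ᵥ x - g ⬝ᵥ y + 2 * α * L)
        (nhdsWithin 0 (Ioi 0)) (nhds (g ⬝ᵥ x - g ⬝ᵥ y)) :=
      ((by fun_prop : Continuous fun α : ℝ => g ⬝ᵥ x - g ⬝ᵥ y + 2 * α * L).tendsto' 0 _
        (by ring)).mono_left nhdsWithin_le_nhds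
    refine ge_of_tendsto hlim ?_
    filter_upwards [self_mem_nhdsWithin] with α hα
    exact hb (add_two_mul_log_affinity_mem_phiValues D A g hx hy hα)

lemma not_bddBelow_phiValues (hx : A x ∈ D.M) (hy : A y ∈ D.M)
    (hr : Real.log (D.affinity (A x) (A y)) < -r) : ¬BddBelow (phiValues D A g r x y) := by
  rintro ⟨b, hb⟩
  set L := Real.log (D.affinity (A x) (A y)) + r
  have hL : L < 0 := by linarith
  have hlim : Filter.Tendsto (fun α : ℝ => g ⬝ᵥ x - g ⬝ᵥ y + 2 * α * L) Filter.atTop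
      Filter.atBot :=
    Filter.tendsto_atBot_add_const_left _ _
      ((Filter.tendsto_id.const_mul_atTop two_pos).atTop_mul_const_of_neg hL)
  obtain ⟨α, hlt, hα⟩ :=
    ((hlim.eventually_lt_atBot b).and (Filter.eventually_gt_atTop 0)).exists
  exact (hb (add_two_mul_log_affinity_mem_phiValues D A g hx hy hα)).not_gt hlt

end PhiStar

section HellingerModulus

variable (D : GoodPair Ω P E) (A : (Fin n → ℝ) →ᵃ[ℝ] E) (g : Fin n → ℝ)
  {X : Set (Fin n → ℝ)} {r : ℝ}

/-- The pairs of points of `X` whose observations have Hellinger affinity at least `e^{-r}`. -/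
def closePairs (D : GoodPair Ω P E) (A : (Fin n → ℝ) →ᵃ[ℝ] E) (X : Set (Fin n → ℝ)) (r : ℝ) :
    Set ((Fin n → ℝ) × (Fin n → ℝ)) :=
  {q | q ∈ X ×ˢ X ∧ -r ≤ Real.log (D.affinity (A q.1) (A q.2))}

/-- Donoho's modulus of continuity of the linear form `gᵀx` on `X`, with closeness of two points
measured by the Hellinger affinity of the observations. -/
noncomputable def hellingerModulus (D : GoodPair Ω P E) (A : (Fin n → ℝ) →ᵃ[ℝ] E)
    (g : Fin n → ℝ) (X : Set (Fin n → ℝ)) (r : ℝ) : ℝ :=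
  sSup ((fun q => g ⬝ᵥ q.1 - g ⬝ᵥ q.2) '' closePairs D A X r)

lemma diag_mem_closePairs {x : Fin n → ℝ} (hx : x ∈ X) (hAx : A x ∈ D.M) (hr : 0 ≤ r) :
    (x, x) ∈ closePairs D A X r :=
  ⟨⟨hx, hx⟩, by simpa [D.affinity_self hAx] using hr⟩

lemma bddAbove_image_closePairs (hX : IsCompact X) :
    BddAbove ((fun q => g ⬝ᵥ q.1 - g ⬝ᵥ q.2) '' closePairs D A X r) :=
  ((hX.prod hX).bddAbove_image (by fun_prop)).mono (image_mono fun _ hq => hq.1)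

lemma lineMap_mem_closePairs (hX : Convex ℝ X) (hA : ∀ x ∈ X, A x ∈ D.M) {x y : Fin n → ℝ}
    (hxy : (x, y) ∈ closePairs D A X r) {t : ℝ} (ht0 : 0 ≤ t) (ht1 : t ≤ 1) :
    (AffineMap.lineMap y x t, y) ∈ closePairs D A X (t * r) := by
  obtain ⟨⟨hx, hy⟩, hr⟩ := hxy
  refine ⟨⟨hX.lineMap_mem hy hx ⟨ht0, ht1⟩, hy⟩, ?_⟩
  calc -(t * r) = t * -r := (mul_neg t r).symm
    _ ≤ t * Real.log (D.affinity (A x) (A y)) := mul_le_mul_of_nonneg_left hr ht0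
    _ ≤ Real.log (D.affinity (A (AffineMap.lineMap y x t)) (A y)) := by
        rw [A.apply_lineMap]
        exact D.mul_log_affinity_le_log_affinity_lineMap (hA x hx) (hA y hy) ht0 ht1

lemma mul_hellingerModulus_le (hXne : X.Nonempty) (hXcp : IsCompact X) (hXcv : Convex ℝ X)
    (hA : ∀ x ∈ X, A x ∈ D.M) (hr : 0 ≤ r) {t : ℝ} (ht0 : 0 ≤ t) (ht1 : t ≤ 1) :
    t * hellingerModulus D A g X r ≤ hellingerModulus D A g X (t * r) := by
  obtain ⟨x₀, hx₀⟩ := hXne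
  rw [hellingerModulus, ← smul_eq_mul, ← Real.sSup_smul_of_nonneg ht0]
  refine csSup_le (Set.Nonempty.smul_set ⟨_, mem_image_of_mem _
    (diag_mem_closePairs D A hx₀ (hA x₀ hx₀) hr)⟩) ?_
  rintro _ ⟨_, ⟨⟨x, y⟩, hxy, rfl⟩, rfl⟩
  refine le_csSup (bddAbove_image_closePairs D A g hXcp)
    ⟨_, lineMap_mem_closePairs D A hXcv hA hxy ht0 ht1, ?_⟩
  simp only [AffineMap.lineMap_apply_module', dotProduct_add, dotProduct_smul, dotProduct_sub,
    smul_eq_mul, add_sub_cancel_right]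

-- Pairs that are not close have `Φ_r` unbounded below, so their real infimum is the junk value
-- `0`, which is also attained on the diagonal and does not affect the supremum.
lemma phiStarSI_eq_half_mul_hellingerModulus (hA : ∀ x ∈ X, A x ∈ D.M) (hr : 0 ≤ r) :
    PhiStarSI D A g X r = (1 / 2) * hellingerModulus D A g X r := by
  change 1 / 2 * sSup {v : ℝ | ∃ x ∈ X, ∃ y ∈ X, v = sInf (phiValues D A g r x y)} = _
  rw [hellingerModulus]
  congr 2
  have sInf_eq {x y : Fin n → ℝ} (hxy : (x, y) ∈ closePairs D A X r) :
      sInf (phiValues D A g r x y) = g ⬝ᵥ x - g ⬝ᵥ y := by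
    obtain ⟨⟨hx, hy⟩, hr⟩ := hxy
    exact (isGLB_phiValues D A g (hA x hx) (hA y hy) hr).csInf_eq
      ⟨_, add_two_mul_log_affinity_mem_phiValues D A g (hA x hx) (hA y hy) one_pos⟩
  refine Subset.antisymm ?_ ?_
  · rintro _ ⟨x, hx, y, hy, rfl⟩
    rcases le_or_gt (-r) (Real.log (D.affinity (A x) (A y))) with hclose | hfar
    · exact ⟨(x, y), ⟨⟨hx, hy⟩, hclose⟩, (sInf_eq ⟨⟨hx, hy⟩, hclose⟩).symm⟩
    · refine ⟨(x, x), diag_mem_closePairs D A hx (hA x hx) hr, ?_⟩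
      simp only [Real.sInf_of_not_bddBelow
        (not_bddBelow_phiValues D A g (hA x hx) (hA y hy) hfar), sub_self]
  · rintro _ ⟨⟨x, y⟩, hxy, rfl⟩
    exact ⟨x, hxy.1.1, y, hxy.1.2, (sInf_eq hxy).symm⟩

end HellingerModulus

section Risk

variable (D : GoodPair Ω P E) (A : (Fin n → ℝ) →ᵃ[ℝ] E) (g : Fin n → ℝ)
  {X : Set (Fin n → ℝ)} {ghat : Ω → ℝ} {ε : ℝ}

-- Without this, `Risk` could be the junk value `sInf ∅ = 0`.
lemma exists_iSup_obsMeasure_lt (hX : IsCompact X) (hA : ∀ x ∈ X, A x ∈ D.M)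
    (hghat : Measurable ghat) (hε : 0 < ε) :
    ∃ δ : ℝ, (⨆ x ∈ X, obsMeasure D (A x) {ω | δ < |ghat ω - g ⬝ᵥ x|})
      < ENNReal.ofReal ε := by
  obtain ⟨R, hR⟩ := D.exists_forall_obsMeasure_real_lt A hX hA hghat (half_pos hε)
  obtain ⟨C, hC⟩ := hX.exists_bound_of_continuousOn (f := fun x => g ⬝ᵥ x) (by fun_prop)
  refine ⟨R + C, lt_of_le_of_lt (iSup₂_le fun x hx => ?_)
    ((ENNReal.ofReal_lt_ofReal_iff hε).2 (half_lt_self hε))⟩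
  have := D.isFiniteMeasure_obsMeasure (hA x hx)
  have hsub : {ω | R + C < |ghat ω - g ⬝ᵥ x|} ⊆ {ω | R < |ghat ω|} := fun ω hω => by
    have hgx : |g ⬝ᵥ x| ≤ C := hC x hx
    have hdev : R + C < |ghat ω - g ⬝ᵥ x| := hω
    have hlarge : R < |ghat ω| := by linarith [abs_sub (ghat ω) (g ⬝ᵥ x)]
    exact hlarge
  exact (measure_mono hsub).trans
    ((ENNReal.le_ofReal_iff_toReal_le (measure_ne_top _ _) (half_pos hε).le).2 (hR x hx).le)

lemma four_mul_le_sq_of_neg_half_log_le {a : ℝ} (ha : 0 < a) (hε : 0 < ε)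
    (h : -(Real.log (1 / (4 * ε)) / 2) ≤ Real.log a) : 4 * ε ≤ a ^ 2 := by
  rw [← Real.log_le_log_iff (by positivity) (by positivity), Real.log_pow, Nat.cast_ofNat]
  rw [one_div, Real.log_inv] at h
  linarith

lemma hellingerModulus_le_two_mul_risk (hXne : X.Nonempty) (hXcp : IsCompact X)
    (hA : ∀ x ∈ X, A x ∈ D.M) (hghat : Measurable ghat) (hε0 : 0 < ε) (hε4 : ε ≤ 1 / 4) :
    hellingerModulus D A g X (Real.log (1 / (4 * ε)) / 2) ≤ 2 * Risk D A g X ghat ε := by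
  obtain ⟨x₀, hx₀⟩ := hXne
  have hlog : 0 ≤ Real.log (1 / (4 * ε)) / 2 :=
    div_nonneg (Real.log_nonneg (by rw [le_div_iff₀ (by positivity)]; linarith)) zero_le_two
  refine csSup_le ⟨_, mem_image_of_mem _ (diag_mem_closePairs D A hx₀ (hA x₀ hx₀) hlog)⟩ ?_
  rintro _ ⟨⟨x, y⟩, ⟨⟨hx, hy⟩, hclose⟩, rfl⟩
  rw [← div_le_iff₀' two_pos]
  refine le_csInf (exists_iSup_obsMeasure_lt D A g hXcp hA hghat hε0) fun δ hδ => ?_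
  have herr (z) (hz : z ∈ X) :
      obsMeasure D (A z) {ω | δ < |ghat ω - g ⬝ᵥ z|} < ENNReal.ofReal ε :=
    (le_iSup₂ (f := fun z (_ : z ∈ X) => obsMeasure D (A z) {ω | δ < |ghat ω - g ⬝ᵥ z|})
      z hz).trans_lt hδ
  rw [div_le_iff₀' two_pos]
  exact D.sub_le_two_mul_of_four_mul_le_affinity_sq (hA x hx) (hA y hy) hghat (herr x hx)
    (herr y hy) (four_mul_le_sq_of_neg_half_log_le (D.affinity_pos (hA x hx) (hA y hy)) hε0
      hclose)

lemma hellingerModulus_le_two_mul_riskStar (hXne : X.Nonempty) (hXcp : IsCompact X)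
    (hA : ∀ x ∈ X, A x ∈ D.M) (hε0 : 0 < ε) (hε4 : ε ≤ 1 / 4) :
    hellingerModulus D A g X (Real.log (1 / (4 * ε)) / 2) ≤ 2 * RiskStar D A g X ε := by
  rw [← div_le_iff₀' two_pos]
  refine le_csInf ⟨_, 0, measurable_const, rfl⟩ ?_
  rintro _ ⟨ghat, hghat, rfl⟩
  rw [div_le_iff₀' two_pos]
  exact hellingerModulus_le_two_mul_risk D A g hXne hXcp hA hghat hε0 hε4

end Risk

theorem riskStar_ge_ratio_phiStar_general (D : GoodPair Ω P E)
    (X : Set (Fin n → ℝ)) (hXne : X.Nonempty) (hXcp : IsCompact X) (hXcv : Convex ℝ X)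
    (A : (Fin n → ℝ) →ᵃ[ℝ] E) (hA : ∀ x ∈ X, A x ∈ D.M)
    (g : Fin n → ℝ) (ε : ℝ) (hε : ε ∈ Set.Ioo (0 : ℝ) (1 / 4)) :
    (Real.log (1 / (4 * ε)) / (2 * Real.log (2 / ε))) * PhiStarSI D A g X (Real.log (2 / ε))
      ≤ RiskStar D A g X ε := by
  obtain ⟨hε0, hε4⟩ := hε
  set r := Real.log (2 / ε)
  set s := Real.log (1 / (4 * ε))
  have hs : 0 ≤ s := Real.log_nonneg (by rw [le_div_iff₀ (by positivity)]; linarith)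
  have hr : 0 < r := Real.log_pos (by rw [lt_div_iff₀ hε0]; linarith)
  have hsr : s ≤ r :=
    Real.log_le_log (by positivity) (by rw [div_le_div_iff₀ (by positivity) hε0]; linarith)
  have ht1 : s / (2 * r) ≤ 1 := (div_le_one (by positivity)).2 (by linarith)
  have htr : s / (2 * r) * r = s / 2 := by field_simp
  calc s / (2 * r) * PhiStarSI D A g X r
      = 1 / 2 * (s / (2 * r) * hellingerModulus D A g X r) := by
        rw [phiStarSI_eq_half_mul_hellingerModulus D A g hA hr.le]
        ring
    _ ≤ 1 / 2 * hellingerModulus D A g X (s / 2) := by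
        have := mul_hellingerModulus_le D A g hXne hXcp hXcv hA hr.le (by positivity) ht1
        rw [htr] at this
        gcongr
    _ ≤ RiskStar D A g X ε := by
        linarith [hellingerModulus_le_two_mul_riskStar D A g hXne hXcp hA hε0 hε4.le]

/-- **Lemma 3.2, inequality (3.3).** For every `ε ∈ (0, 1/4)`, the minimax optimal
risk satisfies `Risk_*(ε) ≥ [ln(1/(4ε)) / (2 ln(2/ε))] · Φ_*(ln(2/ε))`, where
`2Φ_*(r) = sup_{x,y∈X} inf_{φ∈F, α>0} Φ_r(x,y;φ,α)`. -/
theorem riskStar_ge_ratio_phiStar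
    {Ω : Type*} [MeasurableSpace Ω] [TopologicalSpace Ω] [PolishSpace Ω] [BorelSpace Ω]
    {P : Measure Ω} [SigmaFinite P] {m n : ℕ}
    (D : GoodPair Ω P (Fin m → ℝ))
    (X : Set (Fin n → ℝ)) (hXne : X.Nonempty) (hXcp : IsCompact X) (hXcv : Convex ℝ X)
    (A : (Fin n → ℝ) →ᵃ[ℝ] (Fin m → ℝ)) (hA : ∀ x ∈ X, A x ∈ D.M)
    (g : Fin n → ℝ) (ε : ℝ) (hε : ε ∈ Set.Ioo (0 : ℝ) (1/4)) :
    (Real.log (1 / (4 * ε)) / (2 * Real.log (2 / ε))) * PhiStarSI D A g X (Real.log (2 / ε))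
      ≤ RiskStar D A g X ε :=
  riskStar_ge_ratio_phiStar_general D X hXne hXcp hXcv A hA g ε hε
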